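/- arXiv:2605.27244 — 2 statements merged into one kernel-verified Lean document; each statement's English description precedes it below -/
import Mathlib

section
/- Let k be a field of characteristic 2 and R = k[x,y]/(x², y²). Set M₀ = R/(x), M₁ = R/(y), M∞ = R/(x+y), and regard k = R/(x,y) as an R-module; let ε : R → k and ε₀ : M₀ → k, ε₁ : M₁ → k, ε∞ : M∞ → k be the induced augmentation maps. Define R-linear maps h : M₀ × M₁ × M∞ → R, h(m₀,m₁,m∞) = x·m₀ + y·m₁ + (x+y)·m∞ (where multiplication by x, y, x+y gives well-defined maps M₀ → R, M₁ → R, M∞ → R respectively); g : R × k × k → M₀ × M₁ × M∞, g(a,b,c) = (ā + c·ȳ, ā + b·x̄, ā + b·x̄ + c·ȳ), bars denoting residue classes; and f : M₀ × M₁ × M∞ → R × k × k, f(m₀,m₁,m∞) = (x·m₀ + y·m₁ + (x+y)·m∞, ε₀(m₀) + ε∞(m∞), ε₁(m₁) + ε∞(m∞)). Then the ℤ-indexed sequence ⋯ →g M₀×M₁×M∞ →f R×k×k →g M₀×M₁×M∞ →h R →ε k → 0 (with k in degree 0, R in degree −1, M₀×M₁×M∞ in each even degree ≤ −2, R×k×k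 in each odd degree ≤ −3, differential h out of degree −2, g out of each odd degree ≤ −3, f out of each even degree ≤ −4) is a complex and is exact in every degree. Equivalently: ε is surjective; ε∘h = 0 and the kernel of ε equals the range of h; h∘g = 0 and the kernel of h equals the range of g; g∘f = 0 and the kernel of g equals the range of f; f∘g = 0 and the kernel of f equals the range of g. -/
/-!
All exactness statements reduce to the fact that `xy` has annihilator `(x, y)` in
`R = k[x, y]/(x², y²)`. Given `x a + y b + (x + y) c = 0`, that is `x (a + c) + y (b + c) = 0`,
multiplication by `y` and by `x` puts `a + c` and `b + c` in `(x, y)`. Comparing coefficients of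
`xy` once more yields one `r ∈ R` with the same residues as `a`, `b`, `c` in `M₀`, `M₁`, `M∞`, so
`ker h` is the diagonal image of `R`, which is contained in `range g`. If `g (r, b, c) = 0`, then
`r + c y = x p` for some `p`, and the second component forces `b` to be the augmentation of `p`, so
`(r, b, c) = f (p, c, 0)`. Finally `ker f ⊆ ker h`.
-/

open MvPolynomial

noncomputable section

/-- The ideal `(x², y²)` of `k[x,y]`. -/
def IKF (k : Type*) [Field k] : Ideal (MvPolynomial (Fin 2) k) :=
  Ideal.span {(X 0 : MvPolynomial (Fin 2) k) ^ 2, (X 1 : MvPolynomial (Fin 2) k) ^ 2}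

/-- `R = k[x,y]/(x², y²)` (isomorphic to the group algebra of the Klein four-group). -/
abbrev KFR (k : Type*) [Field k] : Type _ := MvPolynomial (Fin 2) k ⧸ IKF k

/-- The class `x` in `R`. -/
def xR (k : Type*) [Field k] : KFR k := Ideal.Quotient.mk (IKF k) (X 0)

/-- The class `y` in `R`. -/
def yR (k : Type*) [Field k] : KFR k := Ideal.Quotient.mk (IKF k) (X 1)

/-- `M₀ = R/(x)`. -/
abbrev M0 (k : Type*) [Field k] : Type _ := KFR k ⧸ Ideal.span {xR k}

/-- `M₁ = R/(y)`. -/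
abbrev M1 (k : Type*) [Field k] : Type _ := KFR k ⧸ Ideal.span {yR k}

/-- `M∞ = R/(x+y)`. -/
abbrev Minf (k : Type*) [Field k] : Type _ := KFR k ⧸ Ideal.span {xR k + yR k}

/-- The quotient map `R → M₀`. -/
def mk0 (k : Type*) [Field k] : KFR k →+* M0 k := Ideal.Quotient.mk _

/-- The quotient map `R → M₁`. -/
def mk1 (k : Type*) [Field k] : KFR k →+* M1 k := Ideal.Quotient.mk _

/-- The quotient map `R → M∞`. -/
def mkinf (k : Type*) [Field k] : KFR k →+* Minf k := Ideal.Quotient.mk _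

lemma mk_span_singleton_eq_mk_iff {R : Type*} [CommRing R] {z a b : R} :
    Ideal.Quotient.mk (Ideal.span {z}) a = Ideal.Quotient.mk (Ideal.span {z}) b ↔ z ∣ a - b := by
  rw [Ideal.Quotient.eq, Ideal.mem_span_singleton]

lemma exists_prod_mk_eq {R : Type*} [CommRing R] {I J K : Ideal R}
    (m : (R ⧸ I) × (R ⧸ J) × (R ⧸ K)) :
    ∃ a b c, (Ideal.Quotient.mk I a, Ideal.Quotient.mk J b, Ideal.Quotient.mk K c) = m := by
  obtain ⟨m₁, m₂, m₃⟩ := m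
  obtain ⟨a, rfl⟩ := Ideal.Quotient.mk_surjective m₁
  obtain ⟨b, rfl⟩ := Ideal.Quotient.mk_surjective m₂
  obtain ⟨c, rfl⟩ := Ideal.Quotient.mk_surjective m₃
  exact ⟨a, b, c, rfl⟩

lemma ker_constantCoeff_eq_idealOfVars {σ A : Type*} [CommSemiring A] :
    RingHom.ker (constantCoeff : MvPolynomial σ A →+* A) = idealOfVars σ A := by
  ext P
  rw [RingHom.mem_ker, constantCoeff_eq, ← notMem_support_iff, idealOfVars, ← Set.image_univ,
    mem_ideal_span_X_image]
  constructor
  · intro hP m hm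
    obtain ⟨i, hi⟩ := Finsupp.ne_iff.1 (ne_of_mem_of_not_mem hm hP)
    exact ⟨i, Set.mem_univ i, hi⟩
  · intro hP h0
    obtain ⟨i, -, hi⟩ := hP 0 h0
    exact hi rfl

lemma constantCoeff_eq_zero_of_X_mul_X_mul_mem {σ A : Type*} [CommSemiring A] {i j : σ}
    (hij : i ≠ j) {P : MvPolynomial σ A}
    (hP : X i * (X j * P) ∈ Ideal.span {(X i : MvPolynomial σ A) ^ 2, (X j) ^ 2}) :
    constantCoeff P = 0 := by
  rw [X_pow_eq_monomial, X_pow_eq_monomial, ← Set.image_pair (fun s ↦ monomial s (1 : A)),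
    mem_ideal_span_monomial_image] at hP
  by_contra h0
  have hmem : Finsupp.single i 1 + (Finsupp.single j 1 + 0) ∈ (X i * (X j * P)).support := by
    rwa [mem_support_iff, coeff_X_mul, coeff_X_mul, ← constantCoeff_eq]
  obtain ⟨s, rfl | rfl, hs⟩ := hP _ hmem
  · simpa [hij] using hs i
  · simpa [hij] using hs j

section QuotSpan

variable {A R : Type*} [CommRing A] [CommRing R] [Algebra A R]

/-- Multiplication by a square-zero element `z`, as a map `R/(z) → R`. -/
def quotSpanMul (z : R) (hz : z * z = 0) : (R ⧸ Ideal.span {z}) →ₗ[R] R :=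
  Submodule.liftQSpanSingleton z (LinearMap.mulLeft R z) hz

lemma eq_quotSpanMul {z : R} (hz : z * z = 0) {μ : (R ⧸ Ideal.span {z}) → R}
    (hμ : ∀ a, μ (Ideal.Quotient.mk _ a) = z * a) : μ = quotSpanMul z hz :=
  funext <| Ideal.Quotient.mk_surjective.forall.2 hμ

/-- The augmentation `R/(z) → A` induced by an augmentation `ε` of `R` that vanishes at `z`. -/
def quotSpanAug (ε : R →ₐ[A] A) {z : R} (hz : ε z = 0) : (R ⧸ Ideal.span {z}) →ₐ[A] A :=
  Ideal.Quotient.liftₐ _ ε ((Ideal.span_singleton_le_iff_mem (I := RingHom.ker ε)).2 hz)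

lemma eq_quotSpanAug {ε : R →ₐ[A] A} {z : R} (hz : ε z = 0) {η : (R ⧸ Ideal.span {z}) → A}
    (hη : ∀ a, η (Ideal.Quotient.mk _ a) = ε a) : η = quotSpanAug ε hz :=
  funext <| Ideal.Quotient.mk_surjective.forall.2 hη

end QuotSpan

/-- The elements `x` and `y` square to zero and generate the kernel of the augmentation `ε`, and
`ε` vanishes on the annihilator of `xy`. This is the only information about
`A[x, y]/(x², y²)` on which the resolution depends. -/
structure IsKleinPair {A R : Type*} [CommRing A] [CommRing R] [Algebra A R] (x y : R)
    (ε : R →ₐ[A] A) : Prop where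
  mul_self_left : x * x = 0
  mul_self_right : y * y = 0
  ker_eq_span : RingHom.ker ε = Ideal.span {x, y}
  aug_eq_zero_of_mul_eq_zero : ∀ r, x * (y * r) = 0 → ε r = 0

namespace IsKleinPair

variable {A R : Type*} [CommRing A] [CommRing R] [Algebra A R] {x y : R} {ε : R →ₐ[A] A}

lemma symm (hp : IsKleinPair x y ε) : IsKleinPair y x ε where
  mul_self_left := hp.mul_self_right
  mul_self_right := hp.mul_self_left
  ker_eq_span := by rw [hp.ker_eq_span, Set.pair_comm]
  aug_eq_zero_of_mul_eq_zero r hr := hp.aug_eq_zero_of_mul_eq_zero r (by rwa [mul_left_comm])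

lemma aug_eq_zero_iff (hp : IsKleinPair x y ε) {r : R} : ε r = 0 ↔ ∃ a b, a * x + b * y = r := by
  rw [← Ideal.mem_span_pair, ← hp.ker_eq_span, RingHom.mem_ker]

lemma aug_left (hp : IsKleinPair x y ε) : ε x = 0 :=
  hp.aug_eq_zero_iff.2 ⟨1, 0, by ring⟩

lemma aug_right (hp : IsKleinPair x y ε) : ε y = 0 :=
  hp.symm.aug_left

lemma aug_add (hp : IsKleinPair x y ε) : ε (x + y) = 0 := by
  rw [map_add, hp.aug_left, hp.aug_right, add_zero]

lemma add_mul_self [CharP R 2] (hp : IsKleinPair x y ε) : (x + y) * (x + y) = 0 := by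
  rw [CharTwo.add_mul_self, hp.mul_self_left, hp.mul_self_right, add_zero]

lemma aug_eq_zero_of_dvd_mul (hp : IsKleinPair x y ε) {r : R} (hr : y ∣ x * r) : ε r = 0 := by
  obtain ⟨s, hs⟩ := hr
  refine hp.aug_eq_zero_of_mul_eq_zero r ?_
  linear_combination y * hs + s * hp.mul_self_right

lemma exists_mul_eq (hp : IsKleinPair x y ε) (r : R) :
    ∃ s, x * r = algebraMap A R (ε r) * x + x * y * s := by
  have haug : ε (r - algebraMap A R (ε r)) = 0 := by
    rw [map_sub, AlgHom.commutes, Algebra.algebraMap_self_apply, sub_self]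
  obtain ⟨a, b, hab⟩ := hp.aug_eq_zero_iff.1 haug
  exact ⟨b, by linear_combination a * hp.mul_self_left - x * hab⟩

lemma exists_common_lift [CharP R 2] (hp : IsKleinPair x y ε) {a b c : R}
    (h : x * a + y * b + (x + y) * c = 0) :
    ∃ r, x ∣ r - a ∧ y ∣ r - b ∧ x + y ∣ r - c := by
  have h2 : (2 : R) = 0 := CharTwo.two_eq_zero
  have h' : x * (a + c) + y * (b + c) = 0 := by linear_combination h
  have hac : ε (a + c) = 0 :=
    hp.aug_eq_zero_of_dvd_mul ⟨-(b + c), by linear_combination h'⟩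
  have hbc : ε (b + c) = 0 :=
    hp.symm.aug_eq_zero_of_dvd_mul ⟨-(a + c), by linear_combination h'⟩
  obtain ⟨p, q, hpq⟩ := hp.aug_eq_zero_iff.1 hac
  obtain ⟨s, t, hst⟩ := hp.aug_eq_zero_iff.1 hbc
  have hqs : ε (q + s) = 0 := hp.aug_eq_zero_of_mul_eq_zero _ <| by
    linear_combination h' + x * hpq + y * hst - p * hp.mul_self_left - t * hp.mul_self_right
  obtain ⟨u, v, huv⟩ := hp.aug_eq_zero_iff.1 hqs
  refine ⟨c + q * (x + y), ⟨q - p, ?_⟩, ⟨q - t + v * x, ?_⟩, ⟨q, ?_⟩⟩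
  · linear_combination hpq + c * h2
  · linear_combination hst - x * huv + u * hp.mul_self_left + (c - s * x) * h2
  · ring

/-- The differential `h (m₀, m₁, m∞) = x m₀ + y m₁ + (x + y) m∞` of the resolution. -/
def hMap [CharP R 2] (hp : IsKleinPair x y ε) :
    ((R ⧸ Ideal.span {x}) × (R ⧸ Ideal.span {y}) × (R ⧸ Ideal.span {x + y})) →ₗ[R] R where
  toFun m := quotSpanMul x hp.mul_self_left m.1 + quotSpanMul y hp.mul_self_right m.2.1 +
    quotSpanMul (x + y) hp.add_mul_self m.2.2
  map_add' m n := by simp only [Prod.fst_add, Prod.snd_add, map_add]; ring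
  map_smul' r m := by simp only [Prod.smul_fst, Prod.smul_snd, map_smul, RingHom.id_apply, smul_add]

/-- The differential `g (a, b, c) = (a + c y, a + b x, a + b x + c y)` of the resolution. It is
recorded as an `A`-linear map, since `A` carries no `R`-module structure here. -/
def gMap (A : Type*) {R : Type*} [CommRing A] [CommRing R] [Algebra A R] (x y : R) :
    R × A × A →ₗ[A]
      (R ⧸ Ideal.span {x}) × (R ⧸ Ideal.span {y}) × (R ⧸ Ideal.span {x + y}) where
  toFun v :=
    (Ideal.Quotient.mk _ v.1 + algebraMap A _ v.2.2 * Ideal.Quotient.mk _ y,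
      Ideal.Quotient.mk _ v.1 + algebraMap A _ v.2.1 * Ideal.Quotient.mk _ x,
      Ideal.Quotient.mk _ v.1 + algebraMap A _ v.2.1 * Ideal.Quotient.mk _ x +
        algebraMap A _ v.2.2 * Ideal.Quotient.mk _ y)
  map_add' v w := by
    simp only [Prod.fst_add, Prod.snd_add, map_add, Prod.mk_add_mk, Prod.mk.injEq]
    refine ⟨?_, ?_, ?_⟩ <;> ring
  map_smul' t v := by
    simp only [Prod.smul_fst, Prod.smul_snd, RingHom.id_apply, Prod.smul_mk, Prod.mk.injEq]
    simp only [Algebra.smul_def, map_mul, Ideal.Quotient.mk_algebraMap,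
      Algebra.algebraMap_self_apply]
    refine ⟨?_, ?_, ?_⟩ <;> ring

/-- The differential `f (m₀, m₁, m∞) = (h (m₀, m₁, m∞), ε₀ m₀ + ε∞ m∞, ε₁ m₁ + ε∞ m∞)` of the
resolution, recorded, like `g`, as an `A`-linear map. -/
def fMap [CharP R 2] (hp : IsKleinPair x y ε) :
    ((R ⧸ Ideal.span {x}) × (R ⧸ Ideal.span {y}) × (R ⧸ Ideal.span {x + y})) →ₗ[A] R × A × A where
  toFun m := (hp.hMap m,
    quotSpanAug ε hp.aug_left m.1 + quotSpanAug ε hp.aug_add m.2.2,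
    quotSpanAug ε hp.aug_right m.2.1 + quotSpanAug ε hp.aug_add m.2.2)
  map_add' m n := by
    simp only [Prod.fst_add, Prod.snd_add, map_add, Prod.mk_add_mk, add_add_add_comm]
  map_smul' t m := by
    simp only [Prod.smul_fst, Prod.smul_snd, RingHom.id_apply, Prod.smul_mk, smul_add, map_smul]
    rw [← algebraMap_smul R t m, map_smul, algebraMap_smul]

lemma hMap_mk [CharP R 2] (hp : IsKleinPair x y ε) (a b c : R) :
    hp.hMap (Ideal.Quotient.mk _ a, Ideal.Quotient.mk _ b, Ideal.Quotient.mk _ c) =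
      x * a + y * b + (x + y) * c :=
  rfl

lemma gMap_apply (r : R) (b c : A) :
    gMap A x y (r, b, c) =
      (Ideal.Quotient.mk _ (r + algebraMap A R c * y),
        Ideal.Quotient.mk _ (r + algebraMap A R b * x),
        Ideal.Quotient.mk _ (r + algebraMap A R b * x + algebraMap A R c * y)) :=
  rfl

lemma gMap_eq_zero_iff {r : R} {b c : A} :
    gMap A x y (r, b, c) = 0 ↔ x ∣ r + algebraMap A R c * y ∧ y ∣ r + algebraMap A R b * x ∧
      x + y ∣ r + algebraMap A R b * x + algebraMap A R c * y := by
  simp only [gMap_apply, Prod.mk_eq_zero, Ideal.Quotient.eq_zero_iff_dvd]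

lemma fMap_mk [CharP R 2] (hp : IsKleinPair x y ε) (a b c : R) :
    hp.fMap (Ideal.Quotient.mk _ a, Ideal.Quotient.mk _ b, Ideal.Quotient.mk _ c) =
      (x * a + y * b + (x + y) * c, ε a + ε c, ε b + ε c) :=
  rfl

lemma exact_hMap_aug [CharP R 2] (hp : IsKleinPair x y ε) : Function.Exact hp.hMap ε := by
  refine fun r ↦ hp.aug_eq_zero_iff.trans ⟨?_, ?_⟩
  · rintro ⟨a, b, rfl⟩
    exact ⟨(Ideal.Quotient.mk _ a, Ideal.Quotient.mk _ b, Ideal.Quotient.mk _ 0),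
      by rw [hMap_mk]; ring⟩
  · rintro ⟨m, rfl⟩
    obtain ⟨a, b, c, rfl⟩ := exists_prod_mk_eq m
    exact ⟨a + c, b + c, by rw [hMap_mk]; ring⟩

lemma fMap_gMap [CharP R 2] (hp : IsKleinPair x y ε) (v : R × A × A) :
    hp.fMap (gMap A x y v) = 0 := by
  obtain ⟨r, b, c⟩ := v
  have h2 : (2 : R) = 0 := CharTwo.two_eq_zero
  have haug : ε r + ε r = 0 := by rw [← map_add, CharTwo.add_self_eq_zero, map_zero]
  rw [gMap_apply, fMap_mk]
  simp only [map_add, map_mul, hp.aug_left, hp.aug_right, mul_zero, add_zero, haug,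
    Prod.mk_eq_zero, and_true]
  linear_combination (r * (x + y) + algebraMap A R b * x * y + algebraMap A R c * x * y) * h2
    + algebraMap A R b * hp.mul_self_left + algebraMap A R c * hp.mul_self_right

lemma exact_gMap_hMap [CharP R 2] (hp : IsKleinPair x y ε) :
    Function.Exact (gMap A x y) hp.hMap := by
  intro m
  constructor
  · intro h
    obtain ⟨a, b, c, rfl⟩ := exists_prod_mk_eq m
    obtain ⟨r, ha, hb, hc⟩ := hp.exists_common_lift h
    refine ⟨(r, 0, 0), ?_⟩
    simp only [gMap_apply, map_zero, zero_mul, add_zero, Prod.mk.injEq,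
      mk_span_singleton_eq_mk_iff]
    exact ⟨ha, hb, hc⟩
  · rintro ⟨v, hv⟩
    rw [← hv]
    exact congrArg Prod.fst (hp.fMap_gMap v)

lemma exact_gMap_fMap [CharP R 2] (hp : IsKleinPair x y ε) :
    Function.Exact (gMap A x y) hp.fMap := by
  refine fun m ↦ ⟨fun hm ↦ (hp.exact_gMap_hMap m).1 (congrArg Prod.fst hm), ?_⟩
  rintro ⟨v, rfl⟩
  exact hp.fMap_gMap v

lemma gMap_fMap [CharP R 2] (hp : IsKleinPair x y ε)
    (m : (R ⧸ Ideal.span {x}) × (R ⧸ Ideal.span {y}) × (R ⧸ Ideal.span {x + y})) :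
    gMap A x y (hp.fMap m) = 0 := by
  have h2 : (2 : R) = 0 := CharTwo.two_eq_zero
  obtain ⟨a, b, c, rfl⟩ := exists_prod_mk_eq m
  obtain ⟨s, hs⟩ := hp.exists_mul_eq (a + c)
  obtain ⟨t, ht⟩ := hp.symm.exists_mul_eq (b + c)
  rw [fMap_mk, ← map_add, ← map_add, gMap_eq_zero_iff]
  refine ⟨⟨a + c + y * t, ?_⟩, ⟨b + c + x * s, ?_⟩, ⟨x * (s + t), ?_⟩⟩
  · linear_combination ht + algebraMap A R (ε (b + c)) * y * h2
  · linear_combination hs + algebraMap A R (ε (a + c)) * x * h2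
  · linear_combination hs + ht - (s + t) * hp.mul_self_left
      + (algebraMap A R (ε (a + c)) * x + algebraMap A R (ε (b + c)) * y) * h2

lemma exact_fMap_gMap [CharP R 2] (hp : IsKleinPair x y ε) :
    Function.Exact hp.fMap (gMap A x y) := by
  have h2 : (2 : R) = 0 := CharTwo.two_eq_zero
  rintro ⟨r, b, c⟩
  constructor
  · rw [gMap_eq_zero_iff]
    rintro ⟨⟨p, hpr⟩, ⟨s, hs⟩, -⟩
    have hb : ε (p + algebraMap A R b) = 0 :=
      hp.aug_eq_zero_of_dvd_mul ⟨s + algebraMap A R c, by linear_combination hs - hpr⟩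
    refine ⟨(Ideal.Quotient.mk _ (-p), Ideal.Quotient.mk _ (algebraMap A R c),
      Ideal.Quotient.mk _ 0), ?_⟩
    rw [map_add, AlgHom.commutes, Algebra.algebraMap_self_apply] at hb
    rw [fMap_mk]
    simp only [map_zero, add_zero, mul_zero, map_neg, AlgHom.commutes,
      Algebra.algebraMap_self_apply, Prod.mk.injEq, and_true]
    exact ⟨by linear_combination -hpr + (algebraMap A R c * y - x * p) * h2,
      by linear_combination -hb⟩
  · rintro ⟨m, hm⟩
    rw [← hm, hp.gMap_fMap]

end IsKleinPair

/-- The augmentation `R → k` of `R = k[x, y]/(x², y²)`, evaluation at `x = y = 0`. -/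
def augmentation (k : Type*) [Field k] : KFR k →ₐ[k] k :=
  Ideal.Quotient.liftₐ (IKF k) (aeval fun _ ↦ 0) <| by
    change IKF k ≤ RingHom.ker (aeval fun _ ↦ (0 : k))
    simp [IKF, Ideal.span_le, Set.insert_subset_iff]

lemma eq_augmentation {k : Type*} [Field k] {ε : KFR k → k}
    (hε : ∀ P, ε (Ideal.Quotient.mk (IKF k) P) = aeval (fun _ ↦ 0) P) : ε = augmentation k :=
  funext <| Ideal.Quotient.mk_surjective.forall.2 hε

lemma augmentation_mk {k : Type*} [Field k] (P : MvPolynomial (Fin 2) k) :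
    augmentation k (Ideal.Quotient.mk (IKF k) P) = constantCoeff P := by
  simp [augmentation]

lemma ker_augmentation (k : Type*) [Field k] :
    RingHom.ker (augmentation k) = Ideal.span {xR k, yR k} := by
  have hker : RingHom.ker (aeval fun _ : Fin 2 ↦ (0 : k)) = idealOfVars (Fin 2) k := by
    ext P
    simp [← ker_constantCoeff_eq_idealOfVars, RingHom.mem_ker]
  calc RingHom.ker (augmentation k)
      = (RingHom.ker (aeval fun _ : Fin 2 ↦ (0 : k))).map (Ideal.Quotient.mk (IKF k)) :=
        Ideal.ker_quotient_lift _ _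
    _ = Ideal.span {xR k, yR k} := by
        rw [hker, idealOfVars, Ideal.map_span, ← Set.range_comp]
        congr 1
        ext r
        simp [Fin.exists_fin_two, xR, yR, eq_comm]

lemma isKleinPair_xR_yR (k : Type*) [Field k] : IsKleinPair (xR k) (yR k) (augmentation k) where
  mul_self_left := by
    rw [xR, ← map_mul, ← sq, Ideal.Quotient.eq_zero_iff_mem]
    exact Ideal.subset_span (Set.mem_insert _ _)
  mul_self_right := by
    rw [yR, ← map_mul, ← sq, Ideal.Quotient.eq_zero_iff_mem]
    exact Ideal.subset_span (Set.mem_insert_of_mem _ rfl)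
  ker_eq_span := ker_augmentation k
  aug_eq_zero_of_mul_eq_zero := by
    refine Ideal.Quotient.mk_surjective.forall.2 fun P hP ↦ ?_
    rw [xR, yR, ← map_mul, ← map_mul, Ideal.Quotient.eq_zero_iff_mem] at hP
    rw [augmentation_mk]
    exact constantCoeff_eq_zero_of_X_mul_X_mul_mem zero_ne_one hP

theorem stmt11_general {A R : Type*} [CommRing A] [CommRing R] [Algebra A R] [CharP R 2] {x y : R}
    {ε : R →ₐ[A] A} (hp : IsKleinPair x y ε) :
    Function.Surjective ε ∧ Function.Exact hp.hMap ε ∧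
      Function.Exact (IsKleinPair.gMap A x y) hp.hMap ∧
      Function.Exact hp.fMap (IsKleinPair.gMap A x y) ∧
      Function.Exact (IsKleinPair.gMap A x y) hp.fMap :=
  ⟨fun t ↦ ⟨algebraMap A R t, ε.commutes t⟩, hp.exact_hMap_aug, hp.exact_gMap_hMap,
    hp.exact_fMap_gMap, hp.exact_gMap_fMap⟩

/-- For `k` a field of characteristic `2`, `R = k[x,y]/(x²,y²)`, `M₀ = R/(x)`,
`M₁ = R/(y)`, `M∞ = R/(x+y)`, with the augmentations `ε, ε₀, ε₁, ε∞` and the maps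
`h(m₀,m₁,m∞) = x·m₀ + y·m₁ + (x+y)·m∞`,
`g(a,b,c) = (ā + c·ȳ, ā + b·x̄, ā + b·x̄ + c·ȳ)`,
`f(m₀,m₁,m∞) = (x·m₀ + y·m₁ + (x+y)·m∞, ε₀(m₀)+ε∞(m∞), ε₁(m₁)+ε∞(m∞))`,
the sequence `⋯ →g M₀×M₁×M∞ →f R×k×k →g M₀×M₁×M∞ →h R →ε k → 0` is a complex and
is exact in every degree: `ε` is surjective; `ε∘h = 0` and `ker ε = range h`;
`h∘g = 0` and `ker h = range g`; `g∘f = 0` and `ker g = range f`; `f∘g = 0` and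
`ker f = range g`. -/
theorem stmt11 (k : Type*) [Field k] [CharP k 2]
    -- ε : R → k is the augmentation (evaluation at x = y = 0):
    (ε : KFR k → k)
    (hε : ∀ P : MvPolynomial (Fin 2) k,
      ε (Ideal.Quotient.mk (IKF k) P) = MvPolynomial.aeval (fun _ : Fin 2 => (0 : k)) P)
    -- the induced augmentations on M₀, M₁, M∞:
    (ε0 : M0 k → k) (hε0 : ∀ a : KFR k, ε0 (mk0 k a) = ε a)
    (ε1 : M1 k → k) (hε1 : ∀ a : KFR k, ε1 (mk1 k a) = ε a)
    (εinf : Minf k → k) (hεinf : ∀ a : KFR k, εinf (mkinf k a) = ε a)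
    -- multiplication by x, y, x+y as well-defined maps M₀ → R, M₁ → R, M∞ → R:
    (μ0 : M0 k → KFR k) (hμ0 : ∀ a : KFR k, μ0 (mk0 k a) = xR k * a)
    (μ1 : M1 k → KFR k) (hμ1 : ∀ a : KFR k, μ1 (mk1 k a) = yR k * a)
    (μinf : Minf k → KFR k) (hμinf : ∀ a : KFR k, μinf (mkinf k a) = (xR k + yR k) * a)
    -- the maps h, g, f:
    (h : M0 k × M1 k × Minf k → KFR k)
    (hh : ∀ m : M0 k × M1 k × Minf k, h m = μ0 m.1 + μ1 m.2.1 + μinf m.2.2)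
    (g : KFR k × k × k → M0 k × M1 k × Minf k)
    (hg : ∀ v : KFR k × k × k,
      g v = (mk0 k v.1 + (algebraMap k (M0 k) : k →+* M0 k) v.2.2 * mk0 k (yR k),
             mk1 k v.1 + (algebraMap k (M1 k) : k →+* M1 k) v.2.1 * mk1 k (xR k),
             mkinf k v.1 + (algebraMap k (Minf k) : k →+* Minf k) v.2.1 * mkinf k (xR k)
               + (algebraMap k (Minf k) : k →+* Minf k) v.2.2 * mkinf k (yR k)))
    (f : M0 k × M1 k × Minf k → KFR k × k × k)
    (hf : ∀ m : M0 k × M1 k × Minf k,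
      f m = (μ0 m.1 + μ1 m.2.1 + μinf m.2.2,
             ε0 m.1 + εinf m.2.2,
             ε1 m.2.1 + εinf m.2.2)) :
    Function.Surjective ε ∧
    (∀ m : M0 k × M1 k × Minf k, ε (h m) = 0) ∧
    {r : KFR k | ε r = 0} = Set.range h ∧
    (∀ v : KFR k × k × k, h (g v) = 0) ∧
    {m : M0 k × M1 k × Minf k | h m = 0} = Set.range g ∧
    (∀ m : M0 k × M1 k × Minf k, g (f m) = 0) ∧
    {v : KFR k × k × k | g v = 0} = Set.range f ∧
    (∀ v : KFR k × k × k, f (g v) = 0) ∧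
    {m : M0 k × M1 k × Minf k | f m = 0} = Set.range g := by
  have : CharP (KFR k) 2 :=
    charP_of_injective_algebraMap (Function.LeftInverse.injective (augmentation k).commutes) 2
  have hp := isKleinPair_xR_yR k
  obtain rfl := eq_augmentation hε
  obtain rfl := eq_quotSpanAug hp.aug_left hε0
  obtain rfl := eq_quotSpanAug hp.aug_right hε1
  obtain rfl := eq_quotSpanAug hp.aug_add hεinf
  obtain rfl := eq_quotSpanMul hp.mul_self_left hμ0
  obtain rfl := eq_quotSpanMul hp.mul_self_right hμ1
  obtain rfl := eq_quotSpanMul hp.add_mul_self hμinf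
  obtain rfl : h = hp.hMap := funext hh
  obtain rfl : g = IsKleinPair.gMap k (xR k) (yR k) := funext hg
  obtain rfl : f = hp.fMap := funext hf
  obtain ⟨hε', hhε, hgh, hfg, hgf⟩ := stmt11_general hp
  exact ⟨hε', hhε.apply_apply_eq_zero, Set.ext hhε, hgh.apply_apply_eq_zero, Set.ext hgh,
    hfg.apply_apply_eq_zero, Set.ext hfg, hgf.apply_apply_eq_zero, Set.ext hgf⟩

end
end

section
/- Let k be a field of characteristic 2 and R = k[x,y]/(x², y²), with M₀ = R/(x), M₁ = R/(y), M∞ = R/(x+y), k = R/(x,y), augmentations ε, ε₀, ε₁, ε∞, and the R-linear maps h : M₀ × M₁ × M∞ → R, h(m₀,m₁,m∞) = x·m₀ + y·m₁ + (x+y)·m∞; g : R × k × k → M₀ × M₁ × M∞, g(a,b,c) = (ā + c·ȳ, ā + b·x̄, ā + b·x̄ + c·ȳ); f : M₀ × M₁ × M∞ → R × k × k, f(m₀,m₁,m∞) = (x·m₀ + y·m₁ + (x+y)·m∞, ε₀(m₀) + ε∞(m∞), ε₁(m₁) + ε∞(m∞)). For an R-module N, let Soc(N) = {n ∈ N : x·n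 = 0 and y·n = 0}. Then Soc(R) = k·(xy), Soc(M₀) = k·ȳ, Soc(M₁) = k·x̄, Soc(M∞) = k·x̄, and Soc(k) = k; the maps ε, h, g, f carry Soc into Soc; and for the restricted maps: ε vanishes on Soc(R); the range of the restriction of h (to Soc(M₀) × Soc(M₁) × Soc(M∞)) equals Soc(R); the range of the restriction of g (to Soc(R) × k × k) equals the kernel of the restriction of h; the range of the restriction of f equals the kernel of the restriction of g; and the range of the restriction of g equals the kernel of the restriction of f. Consequently, the subcomplex of elements annihilated by both x and y of the complex ⋯ →g M₀×M₁×M∞ →f R×k×k →g M₀×M₁×M∞ →h R →ε k → 0 has cohomology isomorphic to k in degree 0 and zero cohomology in every other degree. -/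
open MvPolynomial

noncomputable section

/-- `Soc(R)`: elements of `R` annihilated by both `x` and `y`. -/
def SocR (k : Type*) [Field k] : Set (KFR k) := {r | xR k * r = 0 ∧ yR k * r = 0}

/-- `Soc(M₀)`: elements of `M₀` annihilated by both `x` and `y` (acting through `R`). -/
def SocM0 (k : Type*) [Field k] : Set (M0 k) :=
  {m | mk0 k (xR k) * m = 0 ∧ mk0 k (yR k) * m = 0}

/-- `Soc(M₁)`. -/
def SocM1 (k : Type*) [Field k] : Set (M1 k) :=
  {m | mk1 k (xR k) * m = 0 ∧ mk1 k (yR k) * m = 0}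

/-- `Soc(M∞)`. -/
def SocMinf (k : Type*) [Field k] : Set (Minf k) :=
  {m | mkinf k (xR k) * m = 0 ∧ mkinf k (yR k) * m = 0}

/-!
For coprime scalars `α`, `β` the annihilator of `αx + βy` in `R` is generated by `αx - βy`. In
characteristic `2` each of `ℓ = x, y, x + y` therefore generates its own annihilator, so that
multiplication by `ℓ` embeds `R/(ℓ)` into `R`. Pulling `Soc(R) = k·xy` back along this embedding
gives `Soc(R/(ℓ)) = k·t` for any `t` with `ℓt = xy`. In the resulting coordinates the maps
`h, g, f` become `(a, b, c) ↦ a + b + c`, `(d, b, c) ↦ (c, b, b + c)` and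
`(a, b, c) ↦ (a + b + c, 0, 0)`, whose exactness is plain linear algebra in characteristic `2`.
-/

section SelfAnnihilating

variable {A : Type*} [CommRing A] {ℓ : A}

theorem quotient_mk_eq_mk_iff_mul_eq_mul (hℓ : ∀ r, ℓ * r = 0 ↔ ℓ ∣ r) (a b : A) :
    Ideal.Quotient.mk (Ideal.span {ℓ}) a = Ideal.Quotient.mk (Ideal.span {ℓ}) b ↔
      ℓ * a = ℓ * b := by
  rw [Ideal.Quotient.eq, Ideal.mem_span_singleton, ← hℓ, mul_sub, sub_eq_zero]

theorem quotient_mk_mul_mk_eq_zero_iff (hℓ : ∀ r, ℓ * r = 0 ↔ ℓ ∣ r) (s a : A) :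
    Ideal.Quotient.mk (Ideal.span {ℓ}) s * Ideal.Quotient.mk (Ideal.span {ℓ}) a = 0 ↔
      s * (ℓ * a) = 0 := by
  rw [← map_mul, Ideal.Quotient.eq_zero_iff_dvd, ← hℓ, mul_left_comm]

variable {k : Type*} [CommSemiring k] [Algebra k A] {t z : A}

theorem algebraMap_mul_quotient_mk (c : k) :
    algebraMap k (A ⧸ Ideal.span {ℓ}) c * Ideal.Quotient.mk (Ideal.span {ℓ}) t =
      Ideal.Quotient.mk (Ideal.span {ℓ}) (algebraMap k A c * t) := by
  rw [map_mul, Ideal.Quotient.mk_algebraMap]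

theorem algebraMap_mul_quotient_mk_eq_mk_iff (hℓ : ∀ r, ℓ * r = 0 ↔ ℓ ∣ r) (ht : ℓ * t = z)
    (c : k) (a : A) :
    algebraMap k (A ⧸ Ideal.span {ℓ}) c * Ideal.Quotient.mk (Ideal.span {ℓ}) t =
        Ideal.Quotient.mk (Ideal.span {ℓ}) a ↔
      algebraMap k A c * z = ℓ * a := by
  rw [algebraMap_mul_quotient_mk, quotient_mk_eq_mk_iff_mul_eq_mul hℓ, mul_left_comm, ht]

theorem algebraMap_mul_quotient_mk_eq_zero_iff (hℓ : ∀ r, ℓ * r = 0 ↔ ℓ ∣ r) (ht : ℓ * t = z)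
    (c : k) :
    algebraMap k (A ⧸ Ideal.span {ℓ}) c * Ideal.Quotient.mk (Ideal.span {ℓ}) t = 0 ↔
      algebraMap k A c * z = 0 := by
  simpa using algebraMap_mul_quotient_mk_eq_mk_iff hℓ ht c 0

theorem annihilated_quotient_eq_range {x y : A} (hℓ : ∀ r, ℓ * r = 0 ↔ ℓ ∣ r) (ht : ℓ * t = z)
    (hz : {r : A | x * r = 0 ∧ y * r = 0} = Set.range fun c : k => algebraMap k A c * z) :
    {m : A ⧸ Ideal.span {ℓ} | Ideal.Quotient.mk _ x * m = 0 ∧ Ideal.Quotient.mk _ y * m = 0} =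
      Set.range fun c : k =>
        algebraMap k (A ⧸ Ideal.span {ℓ}) c * Ideal.Quotient.mk (Ideal.span {ℓ}) t := by
  ext m
  obtain ⟨a, rfl⟩ := Ideal.Quotient.mk_surjective m
  calc
    _ ↔ x * (ℓ * a) = 0 ∧ y * (ℓ * a) = 0 :=
      and_congr (quotient_mk_mul_mk_eq_zero_iff hℓ x a) (quotient_mk_mul_mk_eq_zero_iff hℓ y a)
    _ ↔ ∃ c : k, algebraMap k A c * z = ℓ * a := Set.ext_iff.1 hz (ℓ * a)
    _ ↔ _ := exists_congr fun c => (algebraMap_mul_quotient_mk_eq_mk_iff hℓ ht c a).symm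

theorem map_algebraMap_mul_quotient_mk {μ : A ⧸ Ideal.span {ℓ} → A}
    (hμ : ∀ a, μ (Ideal.Quotient.mk _ a) = ℓ * a) (ht : ℓ * t = z) (c : k) :
    μ (algebraMap k (A ⧸ Ideal.span {ℓ}) c * Ideal.Quotient.mk (Ideal.span {ℓ}) t) =
      algebraMap k A c * z := by
  rw [algebraMap_mul_quotient_mk, hμ, mul_left_comm, ht]

end SelfAnnihilating

theorem image_range_eq_sep_of_exact {B M N P Q T : Type*} [Zero N] [Zero T]
    {φ : B → M} {ψ : M → N} {τ : P → B} {σ : Q → M} {ρ : T → N} {u : P → Q} {v : Q → T}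
    (huv : Function.Exact u v) (hφ : ∀ p, φ (τ p) = σ (u p)) (hψ : ∀ q, ψ (σ q) = ρ (v q))
    (hρ : ∀ s, ρ s = 0 ↔ s = 0) :
    φ '' Set.range τ = {m ∈ Set.range σ | ψ m = 0} := by
  have hker (q : Q) : ψ (σ q) = 0 ↔ ∃ p, u p = q := by rw [hψ, hρ, huv q, Set.mem_range]
  ext m
  constructor
  · rintro ⟨_, ⟨p, rfl⟩, rfl⟩
    rw [hφ]
    exact ⟨⟨u p, rfl⟩, (hker _).2 ⟨p, rfl⟩⟩
  · rintro ⟨⟨q, rfl⟩, hq⟩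
    obtain ⟨p, rfl⟩ := (hker q).1 hq
    exact ⟨τ p, ⟨p, rfl⟩, hφ p⟩

theorem image_range_eq_range_of_surjective {M N Q T : Type*} {ψ : M → N} {σ : Q → M} {ρ : T → N}
    {v : Q → T} (hv : Function.Surjective v) (hψ : ∀ q, ψ (σ q) = ρ (v q)) :
    ψ '' Set.range σ = Set.range ρ := by
  have hcomp : ψ ∘ σ = ρ ∘ v := funext hψ
  rw [← Set.range_comp, hcomp, hv.range_comp]

section CoordinateComplex

variable {S : Type*}

/-- The restriction of `h` to the socles, in the coordinates `k·ȳ × k·x̄ × k·x̄` and `k·xy`. -/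
def coordH [Add S] (p : S × S × S) : S := p.1 + p.2.1 + p.2.2

/-- The restriction of `g` to the socles, in the coordinates `k·xy × k × k` and
`k·ȳ × k·x̄ × k·x̄`. -/
def coordG [Add S] (p : S × S × S) : S × S × S := (p.2.2, p.2.1, p.2.1 + p.2.2)

/-- The restriction of `f` to the socles, in the coordinates `k·ȳ × k·x̄ × k·x̄` and
`k·xy × k × k`. -/
def coordF [Add S] [Zero S] (p : S × S × S) : S × S × S := (coordH p, 0, 0)

theorem coordH_surjective [AddZeroClass S] : Function.Surjective (coordH (S := S)) :=
  fun s => ⟨(s, 0, 0), by simp [coordH]⟩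

theorem exact_coordG_coordH [Ring S] [CharP S 2] :
    Function.Exact (coordG (S := S)) (coordH (S := S)) := by
  rintro ⟨a, b, c⟩
  simp [coordG, coordH, CharTwo.add_eq_zero, add_comm, eq_comm]

theorem exact_coordG_coordF [Ring S] [CharP S 2] :
    Function.Exact (coordG (S := S)) (coordF (S := S)) := fun p => by
  rw [← exact_coordG_coordH p, coordF, Prod.mk_eq_zero, Prod.mk_zero_zero, and_iff_left rfl]

theorem exact_coordF_coordG [AddZeroClass S] :
    Function.Exact (coordF (S := S)) (coordG (S := S)) := by
  rintro ⟨d, b, c⟩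
  constructor
  · intro hg
    obtain ⟨rfl, rfl, -⟩ : c = 0 ∧ b = 0 ∧ b + c = 0 := by simpa [coordG] using hg
    exact ⟨(d, 0, 0), by simp [coordF, coordH]⟩
  · rintro ⟨p, ⟨⟩⟩
    simp [coordG]

end CoordinateComplex

namespace KFR

set_option maxSynthPendingDepth 3

variable {k : Type*} [Field k]

theorem xR_mul_xR : xR k * xR k = 0 := by
  rw [xR, ← map_mul, Ideal.Quotient.eq_zero_iff_mem, ← pow_two]
  exact Ideal.subset_span (Set.mem_insert _ _)

theorem yR_mul_yR : yR k * yR k = 0 := by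
  rw [yR, ← map_mul, Ideal.Quotient.eq_zero_iff_mem, ← pow_two]
  exact Ideal.subset_span (Set.mem_insert_of_mem _ rfl)

/-- The element of `R` with coordinates `a, b, c, d` in the basis `1, x, y, xy`. -/
def ofCoords (a b c d : k) : KFR k :=
  algebraMap k (KFR k) a + algebraMap k (KFR k) b * xR k + algebraMap k (KFR k) c * yR k +
    algebraMap k (KFR k) d * (xR k * yR k)

theorem algebraMap_eq_ofCoords (a : k) : algebraMap k (KFR k) a = ofCoords a 0 0 0 := by
  simp [ofCoords]

theorem xR_eq_ofCoords : xR k = ofCoords 0 1 0 0 := by simp [ofCoords]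

theorem yR_eq_ofCoords : yR k = ofCoords 0 0 1 0 := by simp [ofCoords]

theorem algebraMap_mul_xR_mul_yR (d : k) :
    algebraMap k (KFR k) d * (xR k * yR k) = ofCoords 0 0 0 d := by
  simp [ofCoords]

theorem ofCoords_add (a b c d a' b' c' d' : k) :
    ofCoords a b c d + ofCoords a' b' c' d' =
      ofCoords (a + a') (b + b') (c + c') (d + d') := by
  simp only [ofCoords, map_add]
  ring

theorem ofCoords_mul (a b c d a' b' c' d' : k) :
    ofCoords a b c d * ofCoords a' b' c' d' =
      ofCoords (a * a') (a * b' + b * a') (a * c' + c * a')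
        (a * d' + b * c' + c * b' + d * a') := by
  simp only [ofCoords, map_add, map_mul]
  set C := algebraMap k (KFR k)
  linear_combination
    (C b * C b' + (C b * C d' + C d * C b') * yR k + C d * C d' * (yR k * yR k)) *
        xR_mul_xR (k := k) +
      (C c * C c' + (C c * C d' + C d * C c') * xR k) * yR_mul_yR (k := k)

theorem exists_ofCoords_eq (r : KFR k) : ∃ a b c d : k, ofCoords a b c d = r := by
  obtain ⟨P, rfl⟩ := Ideal.Quotient.mk_surjective r
  induction P using MvPolynomial.induction_on with
  | C a => exact ⟨a, 0, 0, 0, (algebraMap_eq_ofCoords a).symm⟩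
  | add P Q hP hQ =>
    obtain ⟨a, b, c, d, hP⟩ := hP
    obtain ⟨a', b', c', d', hQ⟩ := hQ
    rw [map_add, ← hP, ← hQ, ofCoords_add]
    exact ⟨_, _, _, _, rfl⟩
  | mul_X P i hP =>
    obtain ⟨a, b, c, d, hP⟩ := hP
    have hX : ∃ a' b' c' d' : k, ofCoords a' b' c' d' = Ideal.Quotient.mk (IKF k) (X i) := by
      fin_cases i
      · exact ⟨_, _, _, _, xR_eq_ofCoords.symm⟩
      · exact ⟨_, _, _, _, yR_eq_ofCoords.symm⟩
    obtain ⟨a', b', c', d', hX⟩ := hX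
    rw [map_mul, ← hP, ← hX, ofCoords_mul]
    exact ⟨_, _, _, _, rfl⟩

/-- The map from `R` to the iterated dual numbers `k[ε][ε]`, sending `x` to the inner and `y` to
the outer `ε`; it separates the coordinates of `ofCoords`. -/
def toDualNumber : KFR k →ₐ[k] DualNumber (DualNumber k) :=
  Ideal.Quotient.liftₐ (IKF k)
    (aeval ![(TrivSqZeroExt.inl DualNumber.eps : DualNumber (DualNumber k)), DualNumber.eps]) <| by
      refine fun P hP => (Ideal.span_le (I := RingHom.ker _)).2 ?_ hP
      rintro P (rfl | rfl) <;> simp [RingHom.mem_ker, pow_two, ← TrivSqZeroExt.inl_mul]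

theorem toDualNumber_xR : toDualNumber (xR k) = TrivSqZeroExt.inl DualNumber.eps :=
  aeval_X _ 0

theorem toDualNumber_yR : toDualNumber (yR k) = DualNumber.eps :=
  aeval_X _ 1

theorem ofCoords_eq_zero_iff {a b c d : k} :
    ofCoords a b c d = 0 ↔ a = 0 ∧ b = 0 ∧ c = 0 ∧ d = 0 := by
  constructor
  · intro h
    have h' := congrArg toDualNumber h
    simpa [ofCoords, toDualNumber_xR, toDualNumber_yR, TrivSqZeroExt.ext_iff, and_assoc,
      TrivSqZeroExt.algebraMap_eq_inl'] using h'
  · rintro ⟨rfl, rfl, rfl, rfl⟩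
    simp [ofCoords]

theorem algebraMap_mul_xR_mul_yR_eq_zero_iff (d : k) :
    algebraMap k (KFR k) d * (xR k * yR k) = 0 ↔ d = 0 := by
  simp [algebraMap_mul_xR_mul_yR, ofCoords_eq_zero_iff]

theorem linearForm_mul_eq_zero_iff {α β : k} (hαβ : IsCoprime α β) (r : KFR k) :
    ofCoords 0 α β 0 * r = 0 ↔ ofCoords 0 α (-β) 0 ∣ r := by
  obtain ⟨p, q, hpq⟩ := hαβ
  constructor
  · obtain ⟨a, b, c, d, rfl⟩ := exists_ofCoords_eq r
    intro h
    obtain ⟨hαa, hβa, hbc⟩ : α * a = 0 ∧ β * a = 0 ∧ α * c + β * b = 0 := by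
      simpa only [ofCoords_mul, ofCoords_eq_zero_iff, zero_mul, zero_add, add_zero, true_and]
        using h
    refine ⟨ofCoords (p * b - q * c) (-(q * d)) (p * d) 0, ?_⟩
    rw [ofCoords_mul]
    congr 1
    · linear_combination p * hαa + q * hβa - a * hpq
    · linear_combination q * hbc - b * hpq
    · linear_combination p * hbc - c * hpq
    · linear_combination -d * hpq
  · rintro ⟨s, rfl⟩
    have hmul : ofCoords 0 α β 0 * ofCoords 0 α (-β) 0 = 0 := by
      rw [ofCoords_mul, ofCoords_eq_zero_iff]
      refine ⟨?_, ?_, ?_, ?_⟩ <;> ring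
    rw [← mul_assoc, hmul, zero_mul]

theorem xR_mul_eq_zero_iff (r : KFR k) : xR k * r = 0 ↔ xR k ∣ r := by
  simpa only [xR_eq_ofCoords, neg_zero] using
    linearForm_mul_eq_zero_iff (isCoprime_one_left (x := (0 : k))) r

theorem yR_mul_eq_zero_iff (r : KFR k) : yR k * r = 0 ↔ yR k ∣ r := by
  have h := linearForm_mul_eq_zero_iff (isCoprime_one_right (x := (0 : k))) r
  have hneg : ofCoords 0 0 (-1) 0 = -yR k := by simp [ofCoords]
  rwa [hneg, ← yR_eq_ofCoords, neg_dvd] at h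

theorem xR_add_yR_mul_eq_zero_iff [CharP k 2] (r : KFR k) :
    (xR k + yR k) * r = 0 ↔ xR k + yR k ∣ r := by
  have h := linearForm_mul_eq_zero_iff (isCoprime_one_left (x := (1 : k))) r
  have hadd : ofCoords 0 1 1 0 = xR k + yR k := by simp [ofCoords]
  rwa [CharTwo.neg_eq, hadd] at h

theorem xR_add_yR_mul_xR : (xR k + yR k) * xR k = xR k * yR k := by
  rw [add_mul, xR_mul_xR, zero_add, mul_comm]

theorem xR_add_yR_mul_yR : (xR k + yR k) * yR k = xR k * yR k := by
  rw [add_mul, yR_mul_yR, add_zero]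

theorem mkinf_yR [CharP k 2] : mkinf k (yR k) = mkinf k (xR k) :=
  (quotient_mk_eq_mk_iff_mul_eq_mul xR_add_yR_mul_eq_zero_iff _ _).2
    (xR_add_yR_mul_yR.trans xR_add_yR_mul_xR.symm)

theorem SocR_eq_range :
    SocR k = Set.range fun c : k => algebraMap k (KFR k) c * (xR k * yR k) := by
  ext r
  obtain ⟨a, b, c, d, rfl⟩ := exists_ofCoords_eq r
  simp only [algebraMap_mul_xR_mul_yR]
  constructor
  · intro hr
    obtain ⟨⟨ha, hc⟩, -, hb⟩ : (a = 0 ∧ c = 0) ∧ a = 0 ∧ b = 0 := by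
      simpa [SocR, xR_eq_ofCoords, yR_eq_ofCoords, ofCoords_mul, ofCoords_eq_zero_iff] using hr
    exact ⟨d, by rw [ha, hb, hc]⟩
  · rintro ⟨e, he⟩
    rw [← he]
    simp [SocR, xR_eq_ofCoords, yR_eq_ofCoords, ofCoords_mul, ofCoords_eq_zero_iff]

theorem SocM0_eq_range :
    SocM0 k = Set.range fun c : k => algebraMap k (M0 k) c * mk0 k (yR k) :=
  annihilated_quotient_eq_range xR_mul_eq_zero_iff rfl SocR_eq_range

theorem SocM1_eq_range :
    SocM1 k = Set.range fun c : k => algebraMap k (M1 k) c * mk1 k (xR k) :=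
  annihilated_quotient_eq_range yR_mul_eq_zero_iff (mul_comm _ _) SocR_eq_range

theorem SocMinf_eq_range [CharP k 2] :
    SocMinf k = Set.range fun c : k => algebraMap k (Minf k) c * mkinf k (xR k) :=
  annihilated_quotient_eq_range xR_add_yR_mul_eq_zero_iff xR_add_yR_mul_xR SocR_eq_range

/-- The parametrization of `Soc(R) × k × k` by `k × k × k`. -/
def socleR : k × k × k → KFR k × k × k :=
  Prod.map (fun c => algebraMap k (KFR k) c * (xR k * yR k)) id

/-- The parametrization of `Soc(M₀) × Soc(M₁) × Soc(M∞)` by `k × k × k`. -/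
def socleM : k × k × k → M0 k × M1 k × Minf k :=
  Prod.map (fun c => algebraMap k (M0 k) c * mk0 k (yR k))
    (Prod.map (fun c => algebraMap k (M1 k) c * mk1 k (xR k))
      (fun c => algebraMap k (Minf k) c * mkinf k (xR k)))

theorem range_socleR :
    Set.range socleR = SocR k ×ˢ (Set.univ : Set k) ×ˢ (Set.univ : Set k) := by
  rw [socleR, Set.range_prodMap, Set.range_id, Set.univ_prod_univ, SocR_eq_range]

theorem range_socleM [CharP k 2] : Set.range socleM = SocM0 k ×ˢ SocM1 k ×ˢ SocMinf k := by
  rw [socleM, Set.range_prodMap, Set.range_prodMap, SocM0_eq_range, SocM1_eq_range,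
    SocMinf_eq_range]

theorem socleR_eq_zero_iff (p : k × k × k) : socleR p = 0 ↔ p = 0 := by
  simp only [socleR, Prod.ext_iff, Prod.map_fst, Prod.map_snd, Prod.fst_zero, Prod.snd_zero,
    algebraMap_mul_xR_mul_yR_eq_zero_iff, id_eq]

theorem socleM_eq_zero_iff [CharP k 2] (p : k × k × k) : socleM p = 0 ↔ p = 0 := by
  have h0 : algebraMap k (M0 k) p.1 * mk0 k (yR k) = 0 ↔ p.1 = 0 :=
    (algebraMap_mul_quotient_mk_eq_zero_iff xR_mul_eq_zero_iff rfl _).trans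
      (algebraMap_mul_xR_mul_yR_eq_zero_iff _)
  have h1 : algebraMap k (M1 k) p.2.1 * mk1 k (xR k) = 0 ↔ p.2.1 = 0 :=
    (algebraMap_mul_quotient_mk_eq_zero_iff yR_mul_eq_zero_iff (mul_comm _ _) _).trans
      (algebraMap_mul_xR_mul_yR_eq_zero_iff _)
  have hinf : algebraMap k (Minf k) p.2.2 * mkinf k (xR k) = 0 ↔ p.2.2 = 0 :=
    (algebraMap_mul_quotient_mk_eq_zero_iff xR_add_yR_mul_eq_zero_iff xR_add_yR_mul_xR _).trans
      (algebraMap_mul_xR_mul_yR_eq_zero_iff _)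
  simp only [socleM, Prod.ext_iff, Prod.map_fst, Prod.map_snd, Prod.fst_zero, Prod.snd_zero,
    h0, h1, hinf]

section Augmentation

variable {ε : KFR k → k}
  (hε : ∀ P : MvPolynomial (Fin 2) k,
    ε (Ideal.Quotient.mk (IKF k) P) = MvPolynomial.aeval (fun _ : Fin 2 => (0 : k)) P)
include hε

theorem augmentation_mul (r s : KFR k) : ε (r * s) = ε r * ε s := by
  obtain ⟨P, rfl⟩ := Ideal.Quotient.mk_surjective r
  obtain ⟨Q, rfl⟩ := Ideal.Quotient.mk_surjective s
  rw [← map_mul, hε, hε, hε, map_mul]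

theorem augmentation_xR : ε (xR k) = 0 := by rw [xR, hε, aeval_X]

theorem augmentation_yR : ε (yR k) = 0 := by rw [yR, hε, aeval_X]

theorem augmentation_eq_zero_of_mem_SocR {r : KFR k} (hr : r ∈ SocR k) : ε r = 0 := by
  obtain ⟨c, rfl⟩ := SocR_eq_range.subset hr
  rw [augmentation_mul hε, augmentation_mul hε, augmentation_xR hε, zero_mul, mul_zero]

theorem augmentation_algebraMap_mul_quotient_mk {ℓ t : KFR k}
    {η : KFR k ⧸ Ideal.span {ℓ} → k} (hη : ∀ a, η (Ideal.Quotient.mk _ a) = ε a)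
    (ht : ε t = 0) (c : k) :
    η (algebraMap k (KFR k ⧸ Ideal.span {ℓ}) c * Ideal.Quotient.mk (Ideal.span {ℓ}) t) = 0 := by
  rw [algebraMap_mul_quotient_mk, hη, augmentation_mul hε, ht, mul_zero]

end Augmentation

section Restriction

theorem g_socleR [CharP k 2] {g : KFR k × k × k → M0 k × M1 k × Minf k}
    (hg : ∀ v : KFR k × k × k,
      g v = (mk0 k v.1 + algebraMap k (M0 k) v.2.2 * mk0 k (yR k),
             mk1 k v.1 + algebraMap k (M1 k) v.2.1 * mk1 k (xR k),
             mkinf k v.1 + algebraMap k (Minf k) v.2.1 * mkinf k (xR k)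
               + algebraMap k (Minf k) v.2.2 * mkinf k (yR k)))
    (p : k × k × k) : g (socleR p) = socleM (coordG p) := by
  have h0 : mk0 k (socleR p).1 = 0 :=
    (Ideal.Quotient.eq_zero_iff_dvd _ _).2 ((dvd_mul_right _ _).mul_left _)
  have h1 : mk1 k (socleR p).1 = 0 :=
    (Ideal.Quotient.eq_zero_iff_dvd _ _).2 ((dvd_mul_left _ _).mul_left _)
  have hinf : mkinf k (socleR p).1 = 0 :=
    (Ideal.Quotient.eq_zero_iff_dvd _ _).2 ((Dvd.intro _ xR_add_yR_mul_xR).mul_left _)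
  rw [hg, h0, h1, hinf, mkinf_yR, zero_add, zero_add, zero_add, ← add_mul, ← map_add]
  rfl

variable {μ0 : M0 k → KFR k} (hμ0 : ∀ a : KFR k, μ0 (mk0 k a) = xR k * a)
  {μ1 : M1 k → KFR k} (hμ1 : ∀ a : KFR k, μ1 (mk1 k a) = yR k * a)
  {μinf : Minf k → KFR k} (hμinf : ∀ a : KFR k, μinf (mkinf k a) = (xR k + yR k) * a)
include hμ0 hμ1 hμinf

theorem sum_mul_socleM (p : k × k × k) :
    μ0 (socleM p).1 + μ1 (socleM p).2.1 + μinf (socleM p).2.2 =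
      algebraMap k (KFR k) (coordH p) * (xR k * yR k) := by
  have h0 : μ0 (socleM p).1 = algebraMap k (KFR k) p.1 * (xR k * yR k) :=
    map_algebraMap_mul_quotient_mk (t := yR k) hμ0 rfl _
  have h1 : μ1 (socleM p).2.1 = algebraMap k (KFR k) p.2.1 * (xR k * yR k) :=
    map_algebraMap_mul_quotient_mk hμ1 (mul_comm _ _) _
  have hinf : μinf (socleM p).2.2 = algebraMap k (KFR k) p.2.2 * (xR k * yR k) :=
    map_algebraMap_mul_quotient_mk hμinf xR_add_yR_mul_xR _
  rw [h0, h1, hinf, coordH, map_add, map_add, add_mul, add_mul]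

theorem f_socleM {ε : KFR k → k}
    (hε : ∀ P : MvPolynomial (Fin 2) k,
      ε (Ideal.Quotient.mk (IKF k) P) = MvPolynomial.aeval (fun _ : Fin 2 => (0 : k)) P)
    {ε0 : M0 k → k} (hε0 : ∀ a : KFR k, ε0 (mk0 k a) = ε a)
    {ε1 : M1 k → k} (hε1 : ∀ a : KFR k, ε1 (mk1 k a) = ε a)
    {εinf : Minf k → k} (hεinf : ∀ a : KFR k, εinf (mkinf k a) = ε a)
    {f : M0 k × M1 k × Minf k → KFR k × k × k}
    (hf : ∀ m : M0 k × M1 k × Minf k,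
      f m = (μ0 m.1 + μ1 m.2.1 + μinf m.2.2,
             ε0 m.1 + εinf m.2.2,
             ε1 m.2.1 + εinf m.2.2))
    (p : k × k × k) : f (socleM p) = socleR (coordF p) := by
  have h0 : ε0 (socleM p).1 = 0 :=
    augmentation_algebraMap_mul_quotient_mk hε hε0 (augmentation_yR hε) _
  have h1 : ε1 (socleM p).2.1 = 0 :=
    augmentation_algebraMap_mul_quotient_mk hε hε1 (augmentation_xR hε) _
  have hinf : εinf (socleM p).2.2 = 0 :=
    augmentation_algebraMap_mul_quotient_mk hε hεinf (augmentation_xR hε) _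
  rw [hf, sum_mul_socleM hμ0 hμ1 hμinf, h0, h1, hinf, add_zero]
  rfl

end Restriction

end KFR

set_option maxSynthPendingDepth 3 in
/-- For `k` of characteristic `2` and `R = k[x,y]/(x²,y²)` with the maps `ε, h, g, f`
as in the complex `⋯ →g M₀×M₁×M∞ →f R×k×k →g M₀×M₁×M∞ →h R →ε k → 0`:
`Soc(R) = k·(xy)`, `Soc(M₀) = k·ȳ`, `Soc(M₁) = k·x̄`, `Soc(M∞) = k·x̄`, `Soc(k) = k`;
the maps carry `Soc` into `Soc`; `ε` vanishes on `Soc(R)`; `h` maps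
`Soc(M₀)×Soc(M₁)×Soc(M∞)` onto `Soc(R)`; and the ranges of the restrictions of
`g`, `f`, `g` equal the kernels of the restrictions of `h`, `g`, `f` respectively.
Consequently the `Soc`-subcomplex has cohomology `k` in degree `0` and zero
cohomology in every other degree. -/
theorem stmt12 (k : Type*) [Field k] [CharP k 2]
    -- ε : R → k is the augmentation (evaluation at x = y = 0):
    (ε : KFR k → k)
    (hε : ∀ P : MvPolynomial (Fin 2) k,
      ε (Ideal.Quotient.mk (IKF k) P) = MvPolynomial.aeval (fun _ : Fin 2 => (0 : k)) P)
    -- the induced augmentations on M₀, M₁, M∞: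
    (ε0 : M0 k → k) (hε0 : ∀ a : KFR k, ε0 (mk0 k a) = ε a)
    (ε1 : M1 k → k) (hε1 : ∀ a : KFR k, ε1 (mk1 k a) = ε a)
    (εinf : Minf k → k) (hεinf : ∀ a : KFR k, εinf (mkinf k a) = ε a)
    -- multiplication by x, y, x+y as well-defined maps M₀ → R, M₁ → R, M∞ → R:
    (μ0 : M0 k → KFR k) (hμ0 : ∀ a : KFR k, μ0 (mk0 k a) = xR k * a)
    (μ1 : M1 k → KFR k) (hμ1 : ∀ a : KFR k, μ1 (mk1 k a) = yR k * a)
    (μinf : Minf k → KFR k) (hμinf : ∀ a : KFR k, μinf (mkinf k a) = (xR k + yR k) * a)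
    -- the maps h, g, f:
    (h : M0 k × M1 k × Minf k → KFR k)
    (hh : ∀ m : M0 k × M1 k × Minf k, h m = μ0 m.1 + μ1 m.2.1 + μinf m.2.2)
    (g : KFR k × k × k → M0 k × M1 k × Minf k)
    (hg : ∀ v : KFR k × k × k,
      g v = (mk0 k v.1 + algebraMap k (M0 k) v.2.2 * mk0 k (yR k),
             mk1 k v.1 + algebraMap k (M1 k) v.2.1 * mk1 k (xR k),
             mkinf k v.1 + algebraMap k (Minf k) v.2.1 * mkinf k (xR k)
               + algebraMap k (Minf k) v.2.2 * mkinf k (yR k)))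
    (f : M0 k × M1 k × Minf k → KFR k × k × k)
    (hf : ∀ m : M0 k × M1 k × Minf k,
      f m = (μ0 m.1 + μ1 m.2.1 + μinf m.2.2,
             ε0 m.1 + εinf m.2.2,
             ε1 m.2.1 + εinf m.2.2)) :
    -- Soc(R) = k·(xy), Soc(M₀) = k·ȳ, Soc(M₁) = k·x̄, Soc(M∞) = k·x̄, Soc(k) = k:
    SocR k = Set.range (fun c : k => algebraMap k (KFR k) c * (xR k * yR k)) ∧
    SocM0 k = Set.range (fun c : k => algebraMap k (M0 k) c * mk0 k (yR k)) ∧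
    SocM1 k = Set.range (fun c : k => algebraMap k (M1 k) c * mk1 k (xR k)) ∧
    SocMinf k = Set.range (fun c : k => algebraMap k (Minf k) c * mkinf k (xR k)) ∧
    {c : k | ε (xR k) * c = 0 ∧ ε (yR k) * c = 0} = Set.univ ∧
    -- the maps h, g, f carry Soc into Soc (for ε this is trivial since Soc(k) = k):
    (∀ m ∈ SocM0 k ×ˢ SocM1 k ×ˢ SocMinf k, h m ∈ SocR k) ∧
    (∀ v ∈ SocR k ×ˢ (Set.univ : Set k) ×ˢ (Set.univ : Set k),
      g v ∈ SocM0 k ×ˢ SocM1 k ×ˢ SocMinf k) ∧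
    (∀ m ∈ SocM0 k ×ˢ SocM1 k ×ˢ SocMinf k,
      f m ∈ SocR k ×ˢ (Set.univ : Set k) ×ˢ (Set.univ : Set k)) ∧
    -- ε vanishes on Soc(R):
    (∀ r ∈ SocR k, ε r = 0) ∧
    -- the range of the restriction of h equals Soc(R):
    h '' (SocM0 k ×ˢ SocM1 k ×ˢ SocMinf k) = SocR k ∧
    -- range of the restriction of g = kernel of the restriction of h:
    g '' (SocR k ×ˢ (Set.univ : Set k) ×ˢ (Set.univ : Set k)) =
      {m ∈ SocM0 k ×ˢ SocM1 k ×ˢ SocMinf k | h m = 0} ∧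
    -- range of the restriction of f = kernel of the restriction of g:
    f '' (SocM0 k ×ˢ SocM1 k ×ˢ SocMinf k) =
      {v ∈ SocR k ×ˢ (Set.univ : Set k) ×ˢ (Set.univ : Set k) | g v = 0} ∧
    -- range of the restriction of g = kernel of the restriction of f:
    g '' (SocR k ×ˢ (Set.univ : Set k) ×ˢ (Set.univ : Set k)) =
      {m ∈ SocM0 k ×ˢ SocM1 k ×ˢ SocMinf k | f m = 0} := by
  have hH (p : k × k × k) :
      h (KFR.socleM p) = algebraMap k (KFR k) (coordH p) * (xR k * yR k) :=
    (hh _).trans (KFR.sum_mul_socleM hμ0 hμ1 hμinf p)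
  have hG := KFR.g_socleR hg
  have hF := KFR.f_socleM hμ0 hμ1 hμinf hε hε0 hε1 hεinf hf
  rw [← KFR.range_socleM, ← KFR.range_socleR]
  have range_h : h '' Set.range KFR.socleM = SocR k :=
    (image_range_eq_range_of_surjective coordH_surjective hH).trans KFR.SocR_eq_range.symm
  have range_g_eq_ker_h := image_range_eq_sep_of_exact exact_coordG_coordH hG hH
    KFR.algebraMap_mul_xR_mul_yR_eq_zero_iff
  have range_f_eq_ker_g := image_range_eq_sep_of_exact exact_coordF_coordG hF hG
    KFR.socleM_eq_zero_iff
  have range_g_eq_ker_f := image_range_eq_sep_of_exact exact_coordG_coordF hG hF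
    KFR.socleR_eq_zero_iff
  refine ⟨KFR.SocR_eq_range, KFR.SocM0_eq_range, KFR.SocM1_eq_range, KFR.SocMinf_eq_range, ?_,
    fun m hm => range_h.subset (Set.mem_image_of_mem h hm),
    fun v hv => (range_g_eq_ker_h.subset (Set.mem_image_of_mem g hv)).1,
    fun m hm => (range_f_eq_ker_g.subset (Set.mem_image_of_mem f hm)).1,
    fun r hr => KFR.augmentation_eq_zero_of_mem_SocR hε hr,
    range_h, range_g_eq_ker_h, range_f_eq_ker_g, range_g_eq_ker_f⟩
  simp [KFR.augmentation_xR hε, KFR.augmentation_yR hε]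

end
end
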